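/- For each fixed integer r ≥ 3, the ratio f_r(n) / n^{r-1} tends to infinity as n → ∞. -/

import Mathlib

/-- The edge ("window") `{v i, v (i+1), …, v (i+r-1)}` of a tight cycle. -/
def tightWindow {V : Type*} [DecidableEq V] (r : ℕ) {ℓ : ℕ} (v : ZMod ℓ → V)
    (i : ZMod ℓ) : Finset V :=
  Finset.image (fun j : Fin r => v (i + (j : ℕ))) Finset.univ

/-- `E` contains an `r`-uniform tight cycle of length `ℓ`: distinct vertices
`v 0, …, v (ℓ-1)` all of whose `r`-windows (indices mod `ℓ`) are edges of `E`. -/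
def IsTightCycleIn {V : Type*} [DecidableEq V] (r ℓ : ℕ) (E : Set (Finset V)) : Prop :=
  ∃ v : ZMod ℓ → V, Function.Injective v ∧ ∀ i : ZMod ℓ, tightWindow r v i ∈ E

/-- `E` contains an `r`-uniform tight cycle of some length `ℓ > r`. -/
def HasTightCycle {V : Type*} [DecidableEq V] (r : ℕ) (E : Set (Finset V)) : Prop :=
  ∃ ℓ : ℕ, r < ℓ ∧ IsTightCycleIn r ℓ E

/-- `E` is tight-cycle-free. -/
def TightCycleFree {V : Type*} [DecidableEq V] (r : ℕ) (E : Set (Finset V)) : Prop :=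
  ¬ HasTightCycle r E

/-- `f_r(n)`: the maximum number of edges of an `r`-uniform tight-cycle-free
hypergraph on `n` vertices. -/
noncomputable def tightCycleTuran (r n : ℕ) : ℕ :=
  sSup {m | ∃ E : Finset (Finset (Fin n)), (∀ e ∈ E, e.card = r) ∧
    TightCycleFree r (E : Set (Finset (Fin n))) ∧ E.card = m}

/-!
Let `K` be large and let `G` be a finite group containing involutions `s (i, j)`, `i, j < K`, that
define a Cayley graph of girth greater than `2 * K`. In the complete `r`-partite hypergraph whose
parts are copies of `G × Fin K`, keep the edges whose vertices `a`, `b`, `c` in three chosen parts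
satisfy `c.1 = b.1 * s (b.2, c.2) * a.1`. This keeps a proportion `1 / |G|` of all edges, that is
`K * (|G| * K) ^ (r - 1)` of them.

A tight cycle runs through the parts periodically, say `m` times. Replacing a vertex `a` while `b`
and `c` stay the same does not change `a.1`, so `a.1` is constant along the cycle and `m ≤ K`. The
vertices in the other two parts then trace a closed nonbacktracking walk of length `2 * m ≤ 2 * K`
in the Cayley graph, which is impossible.

Such a group is the symmetric group of a ball in the `K ^ 2`-regular edge-coloured tree, with the
involutions that cross the edges of one colour: a reduced word moves the root to the vertex it
labels. Multiplying by a cyclic group makes the order any multiple of a fixed number, so that every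
`n` is covered up to a constant factor.
-/

section InvolutionsOfLargeGirth

/-- The elements `s i` are involutions, and the Cayley graph they generate has girth greater than
`R`: no nonempty word of length at most `R` without equal consecutive letters evaluates to `1`. -/
structure IsInvolutiveGirthGT {S G : Type*} [Monoid G] (s : S → G) (R : ℕ) : Prop where
  mul_self : ∀ i, s i * s i = 1
  prod_ne_one : ∀ w : List S, w.IsChain (· ≠ ·) → w.length ≤ R → w ≠ [] → (w.map s).prod ≠ 1

namespace IsInvolutiveGirthGT

variable {S G : Type*} {s : S → G} {R : ℕ}

theorem prodMk_one [Monoid G] (hs : IsInvolutiveGirthGT s R) (H : Type*) [Monoid H] :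
    IsInvolutiveGirthGT (fun i => (s i, (1 : H))) R where
  mul_self i := by simp [hs.mul_self i]
  prod_ne_one w hw hwR hne h := by
    refine hs.prod_ne_one w hw hwR hne ?_
    simpa [map_list_prod, Function.comp_def] using congrArg (MonoidHom.fst G H) h

theorem ne_of_nonbacktracking_walk [Group G] (hs : IsInvolutiveGirthGT s R) {x : ℕ → G}
    {L : ℕ → S} (hx : ∀ n, x (n + 1) = x n * s (L n)) (hL : ∀ n, L n ≠ L (n + 1)) {m : ℕ}
    (hm : 0 < m) (hmR : m ≤ R) : x m ≠ x 0 := by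
  have hprod : ∀ n, x n = x 0 * (((List.range n).map L).map s).prod := by
    intro n
    induction n with
    | zero => simp
    | succ n ih => simp [hx n, ih, List.range_succ, mul_assoc]
  have hchain : ((List.range m).map L).IsChain (· ≠ ·) := by
    rw [List.isChain_iff_getElem]
    intro i _
    simpa using hL i
  intro h
  refine hs.prod_ne_one _ hchain (by simpa using hmR) (by simpa using hm.ne') ?_
  simpa [hprod m] using h

end IsInvolutiveGirthGT

/-- Words of length at most `R` without equal consecutive letters, i.e. the vertices of the ball of
radius `R` in the `|S|`-regular tree whose edges are properly coloured by `S`. -/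
abbrev ReducedWord (S : Type*) (R : ℕ) : Type _ :=
  {w : List S // w.IsChain (· ≠ ·) ∧ w.length ≤ R}

namespace ReducedWord

variable {S : Type*} {R : ℕ}

instance finite [Finite S] : Finite (ReducedWord S R) :=
  ((List.finite_length_le S R).subset fun _ hw => hw.2).to_subtype

/-- The empty word, which is the root of the tree. -/
def nil : ReducedWord S R := ⟨[], by simp⟩

/-- Removal of the first letter. -/
def tail (w : ReducedWord S R) : ReducedWord S R :=
  ⟨w.1.tail, w.2.1.tail, by grind⟩

variable [DecidableEq S]

/-- Crossing the edge of colour `i` in the tree; a leaf of the ball without such an edge is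
fixed. -/
def flip (i : S) (w : ReducedWord S R) : ReducedWord S R :=
  if hi : w.1.head? = some i then w.tail
  else if hR : w.1.length < R then
    ⟨i :: w.1, List.isChain_cons.2 ⟨fun _ hj hij => hi (hij ▸ hj), w.2.1⟩, hR⟩
  else w

theorem flip_of_head?_eq {i : S} {w : ReducedWord S R} (hi : w.1.head? = some i) :
    flip i w = w.tail :=
  dif_pos hi

theorem flip_tail {i : S} {w : ReducedWord S R} (hi : w.1.head? = some i) :
    flip i w.tail = w := by
  obtain ⟨_ | ⟨j, l⟩, hchain, hlen⟩ := w
  · simp at hi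
  · obtain rfl : j = i := by simpa using hi
    have hl : l.head? ≠ some j := fun h => (List.isChain_cons.1 hchain).1 j h rfl
    have hR : l.length < R := hlen
    simp [flip, tail, hl, hR]

theorem flip_involutive (i : S) : Function.Involutive (flip i : ReducedWord S R → _) := by
  intro w
  by_cases hi : w.1.head? = some i
  · rw [flip_of_head?_eq hi, flip_tail hi]
  by_cases hR : w.1.length < R <;> simp [flip, hi, hR, tail]

/-- The permutation of the ball given by `flip i`. -/
def flipPerm (R : ℕ) (i : S) : Equiv.Perm (ReducedWord S R) :=
  (flip_involutive i).toPerm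

theorem prod_flipPerm_nil (w : ReducedWord S R) : (w.1.map (flipPerm R)).prod nil = w := by
  obtain ⟨l, hl⟩ := w
  induction l with
  | nil => rfl
  | cons i l ih =>
    have hw := ih (tail ⟨i :: l, hl⟩).2
    simp only [List.map_cons, List.prod_cons, Equiv.Perm.mul_apply, hw]
    exact flip_tail (w := ⟨i :: l, hl⟩) rfl

theorem isInvolutiveGirthGT_flipPerm : IsInvolutiveGirthGT (flipPerm (S := S) R) R where
  mul_self i := Equiv.ext (flip_involutive i)
  prod_ne_one w hw hwR hne h := by
    have hnil := prod_flipPerm_nil ⟨w, hw, hwR⟩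
    rw [h] at hnil
    exact hne (congrArg Subtype.val hnil).symm

end ReducedWord

theorem exists_group_isInvolutiveGirthGT.{u} (S : Type u) [Finite S] (R : ℕ) :
    ∃ N : ℕ, 0 < N ∧ ∀ q : ℕ, 0 < q → ∃ (G : Type u) (_ : Group G) (_ : Finite G) (s : S → G),
      Nat.card G = N * q ∧ IsInvolutiveGirthGT s R := by
  classical
  refine ⟨Nat.card (Equiv.Perm (ReducedWord S R)), Nat.card_pos, fun q hq => ?_⟩
  have : NeZero q := ⟨hq.ne'⟩
  refine ⟨Equiv.Perm (ReducedWord S R) × Multiplicative (ZMod q), inferInstance, inferInstance,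
    _, ?_, ReducedWord.isInvolutiveGirthGT_flipPerm.prodMk_one _⟩
  simp [Nat.card_prod]

end InvolutionsOfLargeGirth

section TightCyclesOnPairs

theorem tightWindow_comp {V W : Type*} [DecidableEq V] [DecidableEq W] (r : ℕ) {ℓ : ℕ}
    (φ : V ↪ W) (v : ZMod ℓ → V) (i : ZMod ℓ) :
    tightWindow r (φ ∘ v) i = (tightWindow r v i).map φ := by
  simp only [tightWindow, Finset.map_eq_image, Finset.image_image]
  rfl

theorem TightCycleFree.image_map {V W : Type*} [DecidableEq V] [DecidableEq W] {r : ℕ}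
    (hr : 0 < r) (φ : V ↪ W) {E : Set (Finset V)} (hE : TightCycleFree r E) :
    TightCycleFree r (Finset.map φ '' E) := by
  rintro ⟨ℓ, hℓ, v, hv, hedge⟩
  have hrange : ∀ i, ∃ x, φ x = v i := by
    intro i
    obtain ⟨e, -, he⟩ := hedge i
    have hvi : v i ∈ tightWindow r v i := Finset.mem_image.2 ⟨⟨0, hr⟩, by simp⟩
    rw [← he, Finset.mem_map] at hvi
    exact hvi.imp fun _ h => h.2
  choose u hu using hrange
  obtain rfl : φ ∘ u = v := funext hu
  refine hE ⟨ℓ, hℓ, u, hv.of_comp, fun i => ?_⟩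
  obtain ⟨e, he, hmap⟩ := hedge i
  rw [tightWindow_comp] at hmap
  rwa [← Finset.map_injective φ hmap]

theorem card_le_tightCycleTuran {V : Type*} [Fintype V] [DecidableEq V] {r n : ℕ} (hr : 0 < r)
    (hn : Fintype.card V ≤ n) {E : Finset (Finset V)} (hcard : ∀ e ∈ E, e.card = r)
    (hE : TightCycleFree r (E : Set (Finset V))) : E.card ≤ tightCycleTuran r n := by
  obtain ⟨φ⟩ : Nonempty (V ↪ Fin n) := Function.Embedding.nonempty_of_card_le (by simpa using hn)
  refine le_csSup ⟨2 ^ n, ?_⟩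
    ⟨E.map (Finset.mapEmbedding φ).toEmbedding, ?_, ?_, Finset.card_map _⟩
  · rintro _ ⟨E', -, -, rfl⟩
    simpa using Finset.card_le_univ E'
  · simpa using hcard
  · rw [Finset.coe_map]
    exact hE.image_map hr φ

/-- The graph of `f`, viewed as an edge of a `κ`-partite hypergraph whose parts are copies
of `M`. -/
def transversal {κ M : Type*} [Fintype κ] (f : κ → M) : Finset (κ × M) :=
  Finset.univ.map ⟨fun k => (k, f k), fun _ _ h => congrArg Prod.fst h⟩

theorem mem_transversal {κ M : Type*} [Fintype κ] {f : κ → M} {a : κ × M} :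
    a ∈ transversal f ↔ f a.1 = a.2 := by
  constructor
  · intro ha
    obtain ⟨k, -, rfl⟩ := Finset.mem_map.1 ha
    rfl
  · exact fun ha => Finset.mem_map.2 ⟨a.1, Finset.mem_univ _, Prod.ext rfl ha⟩

theorem card_transversal {κ M : Type*} [Fintype κ] (f : κ → M) :
    (transversal f).card = Fintype.card κ :=
  Finset.card_map _

theorem transversal_injective {κ M : Type*} [Fintype κ] :
    Function.Injective (transversal : (κ → M) → Finset (κ × M)) := by
  intro f f' h
  funext k
  have hk : (k, f' k) ∈ transversal f := h ▸ mem_transversal.2 rfl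
  exact mem_transversal.1 hk

variable {M : Type*} [DecidableEq M] {r ℓ : ℕ} {v : ZMod ℓ → Fin r × M} {t : ZMod ℓ}
  {f f' : Fin r → M}

theorem apply_eq_snd_of_tightWindow_eq (h : tightWindow r v t = transversal f) {j : ℕ}
    (hj : j < r) {k : Fin r} (hk : (v (t + j)).1 = k) : f k = (v (t + j)).2 := by
  subst hk
  rw [← mem_transversal, ← h]
  exact Finset.mem_image.2 ⟨⟨j, hj⟩, Finset.mem_univ _, rfl⟩

theorem bijective_fst_of_tightWindow_eq (h : tightWindow r v t = transversal f) :
    Function.Bijective fun j : Fin r => (v (t + (j : ℕ))).1 := by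
  rw [← Finite.surjective_iff_bijective]
  intro k
  have hk : (k, f k) ∈ tightWindow r v t := h ▸ mem_transversal.2 rfl
  obtain ⟨j, -, hj⟩ := Finset.mem_image.1 hk
  exact ⟨j, congrArg Prod.fst hj⟩

theorem exists_fst_eq_of_tightWindow_eq (h : tightWindow r v t = transversal f) (k : Fin r) :
    ∃ j < r, (v (t + (j : ℕ))).1 = k := by
  obtain ⟨j, hj⟩ := (bijective_fst_of_tightWindow_eq h).surjective k
  exact ⟨j, j.2, hj⟩

theorem eq_of_fst_eq_of_tightWindow_eq (h : tightWindow r v t = transversal f) {i j : ℕ}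
    (hi : i < r) (hj : j < r) (hij : (v (t + i)).1 = (v (t + j)).1) : i = j :=
  congrArg Fin.val <|
    (bijective_fst_of_tightWindow_eq h).injective (a₁ := ⟨i, hi⟩) (a₂ := ⟨j, hj⟩) hij

theorem fst_add_uniformity (h : tightWindow r v t = transversal f)
    (h' : tightWindow r v (t + 1) = transversal f') : (v (t + r)).1 = (v t).1 := by
  obtain ⟨j, hj, hjt⟩ := exists_fst_eq_of_tightWindow_eq h' (v t).1
  have hshift : t + 1 + (j : ZMod ℓ) = t + (j + 1 : ℕ) := by push_cast; ring
  rw [hshift] at hjt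
  obtain hlt | rfl : j + 1 < r ∨ j + 1 = r := by omega
  · have := eq_of_fst_eq_of_tightWindow_eq h hlt (j := 0) (by omega) (by simpa using hjt)
    omega
  · exact hjt

theorem apply_eq_of_tightWindow_succ (h : tightWindow r v t = transversal f)
    (h' : tightWindow r v (t + 1) = transversal f') {k : Fin r} (hk : k ≠ (v t).1) :
    f' k = f k := by
  obtain ⟨_ | j, hj, hjk⟩ := exists_fst_eq_of_tightWindow_eq h k
  · exact absurd hjk.symm (by simpa using hk)
  have hshift : t + (j + 1 : ℕ) = t + 1 + (j : ZMod ℓ) := by push_cast; ring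
  rw [apply_eq_snd_of_tightWindow_eq h hj hjk, hshift]
  exact apply_eq_snd_of_tightWindow_eq h' (by omega) (hshift ▸ hjk)

variable {F : ZMod ℓ → Fin r → M} (hF : ∀ t, tightWindow r v t = transversal (F t))
include hF

theorem exists_fst_eq (k : Fin r) : ∃ t, (v t).1 = k := by
  obtain ⟨j, -, hj⟩ := exists_fst_eq_of_tightWindow_eq (hF 0) k
  exact ⟨_, hj⟩

theorem snd_ne_snd_add_uniformity (hv : Function.Injective v) (hℓ : r < ℓ) (t : ZMod ℓ) :
    (v t).2 ≠ (v (t + r)).2 := by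
  intro h
  have hr : (r : ZMod ℓ) = 0 := by
    simpa using hv (Prod.ext (fst_add_uniformity (hF t) (hF _)).symm h)
  exact Nat.not_dvd_of_pos_of_lt (v 0).1.pos hℓ ((ZMod.natCast_eq_zero_iff r ℓ).1 hr)

theorem fst_add_uniformity_mul (t : ZMod ℓ) (k : ℕ) : (v (t + (r * k : ℕ))).1 = (v t).1 := by
  induction k with
  | zero => simp
  | succ k ih =>
    rw [← ih, ← fst_add_uniformity (hF (t + (r * k : ℕ))) (hF _), mul_add_one, Nat.cast_add,
      add_assoc]

theorem uniformity_dvd_length : r ∣ ℓ := by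
  have hr : 0 < r := (v 0).1.pos
  have hmod : (v (0 + (ℓ % r : ℕ))).1 = (v (0 + (0 : ℕ))).1 := by
    rw [← fst_add_uniformity_mul hF _ (ℓ / r), add_assoc, ← Nat.cast_add, Nat.mod_add_div]
    simp
  exact Nat.dvd_of_mod_eq_zero
    (eq_of_fst_eq_of_tightWindow_eq (hF 0) (Nat.mod_lt _ hr) hr hmod)

theorem apply_add_uniformity_mul {t : ZMod ℓ} {k : Fin r} (ht : (v t).1 = k) (n : ℕ) :
    F (t + (r * n : ℕ)) k = (v (t + (r * n : ℕ))).2 := by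
  simpa using apply_eq_snd_of_tightWindow_eq (hF (t + (r * n : ℕ))) (j := 0) k.pos
    (by simpa using (fst_add_uniformity_mul hF t n).trans ht)

theorem exists_closed_path_of_rel (hv : Function.Injective v) (hℓ : r < ℓ) {y z : Fin r}
    (hyz : y ≠ z) {Rel : M → M → Prop} (hRel : ∀ t, Rel (F t y) (F t z)) :
    ∃ b c : ℕ → M, (∀ k, Rel (b k) (c k)) ∧ (∀ k, Rel (b (k + 1)) (c k)) ∧
      (∀ k, b k ≠ b (k + 1)) ∧ (∀ k, c k ≠ c (k + 1)) ∧ b (ℓ / r) = b 0 := by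
  obtain ⟨t, ht⟩ := exists_fst_eq hF y
  obtain ⟨j, hj, htj⟩ := exists_fst_eq_of_tightWindow_eq (hF t) z
  have hj0 : j ≠ 0 := by
    rintro rfl
    exact hyz (by simpa [← ht] using htj)
  have hsucc : ∀ (t : ZMod ℓ) k, t + (r * (k + 1) : ℕ) = t + (r * k : ℕ) + r := fun t k => by
    rw [mul_add_one, Nat.cast_add, add_assoc]
  have hne : ∀ t k, (v (t + (r * k : ℕ))).2 ≠ (v (t + (r * (k + 1) : ℕ))).2 := fun t k => by
    simpa only [hsucc] using snd_ne_snd_add_uniformity hF hv hℓ _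
  refine ⟨fun k => (v (t + (r * k : ℕ))).2, fun k => (v (t + j + (r * k : ℕ))).2,
    fun k => ?_, fun k => ?_, hne t, hne (t + j), ?_⟩
  · have hz : F (t + (r * k : ℕ)) z = (v (t + j + (r * k : ℕ))).2 := by
      rw [add_right_comm]
      refine apply_eq_snd_of_tightWindow_eq (hF _) hj ?_
      rw [add_right_comm, fst_add_uniformity_mul hF, htj]
    simpa only [apply_add_uniformity_mul hF ht, hz] using hRel (t + (r * k : ℕ))
  · have hback : t + j + (r * k : ℕ) + (r - j : ℕ) = t + (r * (k + 1) : ℕ) := by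
      push_cast [hj.le]
      ring
    have hy : F (t + j + (r * k : ℕ)) y = (v (t + (r * (k + 1) : ℕ))).2 := by
      rw [← hback]
      refine apply_eq_snd_of_tightWindow_eq (hF _) (by omega) ?_
      rw [hback, fst_add_uniformity_mul hF, ht]
    simpa only [apply_add_uniformity_mul hF htj, hy] using hRel (t + j + (r * k : ℕ))
  · simp [Nat.mul_div_cancel' (uniformity_dvd_length hF)]

theorem length_div_uniformity_le_ncard (hv : Function.Injective v) {x : Fin r} {A : Set M}
    (hA : A.Finite) (hx : ∀ t, F t x ∈ A) : ℓ / r ≤ A.ncard := by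
  obtain ⟨t, ht⟩ := exists_fst_eq hF x
  let u : Fin (ℓ / r) → M := fun k => (v (t + (r * k : ℕ))).2
  have huA : ∀ k, u k ∈ A := fun k => by
    simpa only [apply_add_uniformity_mul hF ht] using hx (t + (r * k : ℕ))
  have hu : Function.Injective u := by
    intro k k' h
    have hpart := (fst_add_uniformity_mul hF t k).trans (fst_add_uniformity_mul hF t k').symm
    have hmod := (ZMod.natCast_eq_natCast_iff _ _ _).1 (add_left_cancel (hv (Prod.ext hpart h)))
    have hlt : ∀ i : Fin (ℓ / r), r * i < ℓ := fun i =>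
      (Nat.lt_div_iff_mul_lt' (uniformity_dvd_length hF) _).1 i.2
    exact Fin.ext (Nat.eq_of_mul_eq_mul_left x.pos (hmod.eq_of_lt_of_lt (hlt k) (hlt k')))
  simpa [← Set.image_univ, Set.ncard_image_of_injective _ hu, Set.ncard_univ] using
    Set.ncard_le_ncard (Set.range_subset_iff.2 huA) hA

end TightCyclesOnPairs

section TwistedHypergraph

variable {G ι : Type*} [Group G] {s : ι × ι → G}

/-- The link graph of a vertex with group coordinate `g`: the triple `(a, b, c)` of the construction
satisfies `c.1 = b.1 * s (b.2, c.2) * a.1`, so the link depends only on `g = a.1`. -/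
def TwistedAdj (s : ι × ι → G) (g : G) (b c : G × ι) : Prop :=
  c.1 = b.1 * s (b.2, c.2) * g

namespace TwistedAdj

variable {g g' : G} {b b' c c' : G × ι}

theorem group_coord_unique (h : TwistedAdj s g b c) (h' : TwistedAdj s g' b c) : g = g' :=
  mul_left_cancel (h.symm.trans h')

theorem eq_left (h : TwistedAdj s g b c) (h' : TwistedAdj s g b' c) (hb : b.2 = b'.2) :
    b = b' := by
  refine Prod.ext ?_ hb
  have hc := h.symm.trans h'
  rw [hb] at hc
  exact mul_right_cancel (mul_right_cancel hc)

theorem eq_right (h : TwistedAdj s g b c) (h' : TwistedAdj s g b c') (hc : c.2 = c'.2) :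
    c = c' := by
  refine Prod.ext ?_ hc
  rw [h, h', hc]

end TwistedAdj

/-- The sequence `b 0, c 0, b 1, c 1, …`. -/
def interleave {α : Type*} (b c : ℕ → α) (n : ℕ) : α :=
  if Even n then b (n / 2) else c (n / 2)

theorem interleave_two_mul {α : Type*} (b c : ℕ → α) (k : ℕ) : interleave b c (2 * k) = b k := by
  simp [interleave]

theorem interleave_two_mul_add_one {α : Type*} (b c : ℕ → α) (k : ℕ) :
    interleave b c (2 * k + 1) = c k := by
  simp [interleave, Nat.mul_add_div]

-- A path in the link of `g` is a nonbacktracking walk in the Cayley graph: replace `c` by `c g⁻¹`.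
theorem IsInvolutiveGirthGT.ne_of_twistedAdj {R : ℕ} (hs : IsInvolutiveGirthGT s R) {g : G}
    {b c : ℕ → G × ι} (hbc : ∀ k, TwistedAdj s g (b k) (c k))
    (hcb : ∀ k, TwistedAdj s g (b (k + 1)) (c k)) (hb : ∀ k, b k ≠ b (k + 1))
    (hc : ∀ k, c k ≠ c (k + 1)) {m : ℕ} (hm : 0 < m) (hmR : 2 * m ≤ R) : b m ≠ b 0 := by
  let x := interleave (fun k => (b k).1) fun k => (c k).1 * g⁻¹
  let L := interleave (fun k => ((b k).2, (c k).2)) fun k => ((b (k + 1)).2, (c k).2)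
  have hx : ∀ n, x (n + 1) = x n * s (L n) := by
    intro n
    obtain ⟨k, rfl | rfl⟩ := n.even_or_odd'
    · simp only [x, L, interleave_two_mul, interleave_two_mul_add_one]
      rw [hbc k, mul_inv_cancel_right]
    · rw [show 2 * k + 1 + 1 = 2 * (k + 1) by ring]
      simp only [x, L, interleave_two_mul, interleave_two_mul_add_one]
      rw [hcb k, mul_inv_cancel_right, mul_assoc, hs.mul_self, mul_one]
  have hL : ∀ n, L n ≠ L (n + 1) := by
    intro n h
    obtain ⟨k, rfl | rfl⟩ := n.even_or_odd'
    · simp only [L, interleave_two_mul, interleave_two_mul_add_one] at h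
      exact hb k ((hbc k).eq_left (hcb k) (congrArg Prod.fst h))
    · rw [show 2 * k + 1 + 1 = 2 * (k + 1) by ring] at h
      simp only [L, interleave_two_mul, interleave_two_mul_add_one] at h
      exact hc k ((hcb k).eq_right (hbc (k + 1)) (congrArg Prod.snd h :))
  intro h
  refine hs.ne_of_nonbacktracking_walk hx hL (m := 2 * m) (by omega) hmR ?_
  simp [x, interleave, h]

/-- The transversals whose vertices in the parts `x`, `y`, `z` form a triple of the construction;
the other vertices are arbitrary. -/
def twistedHypergraph {κ : Type*} [Fintype κ] (s : ι × ι → G) (x y z : κ) :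
    Set (Finset (κ × (G × ι))) :=
  transversal '' {f | TwistedAdj s (f x).1 (f y) (f z)}

variable {r ℓ : ℕ} {x y z : Fin r}

theorem group_coord_eq_of_tightWindow_eq [NeZero ℓ] [DecidableEq (G × ι)]
    {v : ZMod ℓ → Fin r × (G × ι)} {F : ZMod ℓ → Fin r → G × ι}
    (hF : ∀ t, tightWindow r v t = transversal (F t))
    (hadj : ∀ t, TwistedAdj s (F t x).1 (F t y) (F t z)) (hxy : x ≠ y) (hxz : x ≠ z)
    (t t' : ZMod ℓ) : (F t' x).1 = (F t x).1 := by
  have hsucc : ∀ t, (F (t + 1) x).1 = (F t x).1 := by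
    intro t
    by_cases hx : x = (v t).1
    · have h := hadj (t + 1)
      rw [apply_eq_of_tightWindow_succ (hF t) (hF _) (k := y) (hx ▸ hxy.symm),
        apply_eq_of_tightWindow_succ (hF t) (hF _) (k := z) (hx ▸ hxz.symm)] at h
      exact h.group_coord_unique (hadj t)
    · rw [apply_eq_of_tightWindow_succ (hF t) (hF _) hx]
  have hadd : ∀ n : ℕ, (F (t + n) x).1 = (F t x).1 := by
    intro n
    induction n with
    | zero => simp
    | succ n ih => rw [Nat.cast_succ, ← add_assoc, hsucc, ih]
  simpa using hadd (t' - t).val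

theorem tightCycleFree_twistedHypergraph [DecidableEq (G × ι)] [Finite ι]
    (hs : IsInvolutiveGirthGT s (2 * Nat.card ι)) (hxy : x ≠ y) (hxz : x ≠ z) (hyz : y ≠ z) :
    TightCycleFree r (twistedHypergraph s x y z) := by
  rintro ⟨ℓ, hℓ, v, hv, hedge⟩
  choose F hadj hF using hedge
  replace hF : ∀ t, tightWindow r v t = transversal (F t) := fun t => (hF t).symm
  have : NeZero ℓ := ⟨by omega⟩
  have hg : ∀ t, (F t x).1 = (F 0 x).1 := group_coord_eq_of_tightWindow_eq hF hadj hxy hxz 0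
  have hlink : ∀ t, TwistedAdj s (F 0 x).1 (F t y) (F t z) := fun t => hg t ▸ hadj t
  have hcard : ℓ / r ≤ Nat.card ι := by
    simpa [Set.ncard_prod] using length_div_uniformity_le_ncard hF hv (x := x)
      (A := {(F 0 x).1} ×ˢ Set.univ) (Set.toFinite _) fun t => ⟨hg t, Set.mem_univ _⟩
  obtain ⟨b, c, hbc, hcb, hb, hc, hclosed⟩ := exists_closed_path_of_rel hF hv hℓ hyz hlink
  exact hs.ne_of_twistedAdj hbc hcb hb hc (Nat.div_pos hℓ.le x.pos)
    (Nat.mul_le_mul_left 2 hcard) hclosed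

theorem card_mul_pow_le_ncard_twistedHypergraph [Finite G] [Finite ι] (hxz : x ≠ z)
    (hyz : y ≠ z) : Nat.card ι * (Nat.card G * Nat.card ι) ^ (r - 1) ≤
      (twistedHypergraph s x y z).ncard := by
  let solve : ι × ({k // k ≠ z} → G × ι) → (Fin r → G × ι) := fun p =>
    (Equiv.funSplitAt z (G × ι)).symm
      (((p.2 ⟨y, hyz⟩).1 * s ((p.2 ⟨y, hyz⟩).2, p.1) * (p.2 ⟨x, hxz⟩).1, p.1), p.2)
  have hsolve : Function.Injective solve := by
    intro p p' h
    have h' := (Equiv.funSplitAt z (G × ι)).symm.injective h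
    exact Prod.ext (congrArg (fun q => q.1.2) h' :) (congrArg Prod.snd h' :)
  have hmem : transversal '' Set.range solve ⊆ twistedHypergraph s x y z := by
    refine Set.image_mono (Set.range_subset_iff.2 fun p => ?_)
    simp [solve, TwistedAdj, hxz, hyz]
  have hle := Set.ncard_le_ncard hmem (Set.toFinite _)
  rw [Set.ncard_image_of_injective _ transversal_injective, ← Set.image_univ,
    Set.ncard_image_of_injective _ hsolve, Set.ncard_univ] at hle
  simpa [Nat.card_prod, Nat.card_fun] using hle

end TwistedHypergraph

theorem mul_pow_le_tightCycleTuran {G ι : Type*} [Group G] [Finite G] [Finite ι] {s : ι × ι → G}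
    (hs : IsInvolutiveGirthGT s (2 * Nat.card ι)) {r n : ℕ} (hr : 3 ≤ r)
    (hn : r * (Nat.card G * Nat.card ι) ≤ n) :
    Nat.card ι * (Nat.card G * Nat.card ι) ^ (r - 1) ≤ tightCycleTuran r n := by
  classical
  have := Fintype.ofFinite G
  have := Fintype.ofFinite ι
  obtain ⟨x, y, z, hxy, hxz, hyz⟩ :=
    Fintype.two_lt_card_iff.1 (hr.trans_eq (Fintype.card_fin r).symm)
  refine (card_mul_pow_le_ncard_twistedHypergraph (s := s) hxz hyz).trans ?_
  rw [Set.ncard_eq_toFinset_card']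
  refine card_le_tightCycleTuran (by omega) (by simpa using hn) ?_ ?_
  · intro e he
    obtain ⟨f, -, rfl⟩ := Set.mem_toFinset.1 he
    simp [card_transversal]
  · simpa using tightCycleFree_twistedHypergraph hs hxy hxz hyz

theorem exists_forall_mul_pow_le_tightCycleTuran {r : ℕ} (hr : 3 ≤ r) {K : ℕ} (hK : 0 < K) :
    ∃ D : ℕ, 0 < D ∧ ∀ q n : ℕ, 0 < q → r * (D * q) ≤ n →
      K * (D * q) ^ (r - 1) ≤ tightCycleTuran r n := by
  obtain ⟨N, hN, hG⟩ := exists_group_isInvolutiveGirthGT (Fin K × Fin K) (2 * K)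
  refine ⟨N * K, Nat.mul_pos hN hK, fun q n hq hn => ?_⟩
  obtain ⟨G, _, _, s, hcard, hs⟩ := hG q hq
  have hle := mul_pow_le_tightCycleTuran (ι := Fin K) (n := n) (by simpa using hs) hr
  rw [hcard, Nat.card_fin, mul_right_comm] at hle
  exact hle hn

theorem tendsto_div_pow_atTop {f : ℕ → ℕ} {r d : ℕ} (hr : 0 < r)
    (hf : ∀ K > 0, ∃ D > 0, ∀ q n, 0 < q → r * (D * q) ≤ n → K * (D * q) ^ d ≤ f n) :
    Filter.Tendsto (fun n : ℕ => (f n : ℝ) / (n : ℝ) ^ d) Filter.atTop Filter.atTop := by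
  refine Filter.tendsto_atTop.2 fun C => ?_
  obtain ⟨K, hK⟩ := exists_nat_ge (C * (2 * r) ^ d)
  obtain ⟨D, hD, hfD⟩ := hf (K + 1) K.succ_pos
  filter_upwards [Filter.eventually_ge_atTop (r * D)] with n hn
  have hrD : 0 < r * D := Nat.mul_pos hr hD
  set q := n / (r * D)
  have hq : 0 < q := Nat.div_pos hn hrD
  have hn_le : n ≤ 2 * r * (D * q) :=
    calc n ≤ r * D * (q + 1) := (Nat.lt_mul_div_succ n hrD).le
      _ ≤ r * D * (q + q) := by gcongr; exact hq
      _ = 2 * r * (D * q) := by ring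
  have hfn : (K + 1) * (D * q) ^ d ≤ f n :=
    hfD q n hq (by simpa [mul_assoc] using Nat.mul_div_le n (r * D))
  have hpow : K * n ^ d ≤ f n * (2 * r) ^ d :=
    calc K * n ^ d ≤ (K + 1) * (2 * r * (D * q)) ^ d := by gcongr; omega
      _ = (K + 1) * (D * q) ^ d * (2 * r) ^ d := by ring
      _ ≤ f n * (2 * r) ^ d := by gcongr
  have hn0 : (0 : ℝ) < n := by exact_mod_cast hrD.trans_le hn
  calc C ≤ K / (2 * r) ^ d := (le_div_iff₀ (by positivity)).2 hK
    _ ≤ f n / n ^ d := (div_le_div_iff₀ (by positivity) (by positivity)).2 (by exact_mod_cast hpow)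

/-- For each fixed `r ≥ 3`, `f_r(n) / n^{r-1} → ∞` as `n → ∞`. -/
theorem tightCycleTuran_div_tendsto_atTop (r : ℕ) (hr : 3 ≤ r) :
    Filter.Tendsto (fun n : ℕ => (tightCycleTuran r n : ℝ) / (n : ℝ) ^ (r - 1))
      Filter.atTop Filter.atTop := by
  exact tendsto_div_pow_atTop (by omega) fun _ hK => exists_forall_mul_pow_le_tightCycleTuran hr hK
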